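/- arXiv:1606.03851 — 2 statements merged into one kernel-verified Lean document; each statement's English description precedes it below -/
import Mathlib

section
/- (Lemma 2.) Let g, d, A, P_S, P_E > 0 be reals with α = g/d > 1 and P_E ≥ α(1 + g·P_S)/A. Then: (i) min{1, (−1 + √(1 + 4·P_S·P_E·d·A))/(2·g·P_S)} = 1, so the maximum-destination-SNR function takes the linear form γ_D^max(ρ) = (1 + ρ·g/d)·P_S·d on all of [0, 1]; (ii) ρ* = (1 − 1/α)/2 lies in (0, 1/2) and is the unique solution in [0, 1] of the equation (1 + ρ·g/d)·P_S·d = (1 − ρ)·g·P_S; and (iii) at ρ = ρ* both sides equal (g + d)·P_S/2. -/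
/-!
In terms of `x = ρ g P_S`, the unclipped threshold is where `x` equals the positive root of
`x (1 + x) = P_S P_E d A`. At `ρ = 1`, being below that root is the inequality
`g (1 + g P_S) ≤ P_E d A`, which is the assumed lower bound on `P_E`. Hence only the linear branch
`(d + ρ g) P_S` is ever active, and equating it with `(1 - ρ) g P_S` gives `2 ρ g = g - d`.
-/

/-- The eavesdropper SNR `γ_E(ρ)`, where `g = ‖h_SE‖²`. -/
noncomputable def eavesdropperSNR (g P_S ρ : ℝ) : ℝ :=
  (1 - ρ) * g * P_S

/-- The first branch of the maximum destination SNR `γ_D^max(ρ)`, extended to all real `ρ`, where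
`g = ‖h_SE‖²` and `d = |h_SD|²`. -/
noncomputable def linearDestinationSNR (g d P_S ρ : ℝ) : ℝ :=
  (1 + ρ * g / d) * P_S * d

/-- The ratio at which the first branch of `γ_D^max` ends, before it is clipped to `ρ₁` by
`min 1`. -/
noncomputable def linearRegimeEnd (g d A P_S P_E : ℝ) : ℝ :=
  (-1 + √(1 + 4 * P_S * P_E * d * A)) / (2 * g * P_S)

/-- The splitting ratio `ρ*` that balances the two SNRs, as a function of `α = g / d`. -/
noncomputable def balancedRatio (α : ℝ) : ℝ :=
  (1 - 1 / α) / 2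

theorem two_mul_le_neg_one_add_sqrt_iff {x c : ℝ} (hx : 0 < 1 + 2 * x) :
    2 * x ≤ -1 + √(1 + 4 * c) ↔ x * (1 + x) ≤ c := by
  calc 2 * x ≤ -1 + √(1 + 4 * c)
      ↔ 1 + 2 * x ≤ √(1 + 4 * c) := le_neg_add_iff_add_le
    _ ↔ (1 + 2 * x) ^ 2 ≤ 1 + 4 * c := Real.le_sqrt' hx
    _ ↔ x * (1 + x) ≤ c := by constructor <;> intro h <;> linarith

section LinearRegime

variable {g d A P_S P_E : ℝ}

theorem le_linearRegimeEnd_iff {ρ : ℝ} (hg : 0 < g) (hPS : 0 < P_S) (hρ : 0 ≤ ρ) :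
    ρ ≤ linearRegimeEnd g d A P_S P_E ↔ ρ * g * (1 + ρ * g * P_S) ≤ P_E * d * A := by
  calc ρ ≤ linearRegimeEnd g d A P_S P_E
      ↔ 2 * (ρ * g * P_S) ≤ -1 + √(1 + 4 * (P_S * (P_E * d * A))) := by
        rw [linearRegimeEnd, le_div_iff₀ (by positivity)]
        ring_nf
    _ ↔ ρ * g * P_S * (1 + ρ * g * P_S) ≤ P_S * (P_E * d * A) :=
        two_mul_le_neg_one_add_sqrt_iff (by positivity)
    _ ↔ P_S * (ρ * g * (1 + ρ * g * P_S)) ≤ P_S * (P_E * d * A) := by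
        rw [mul_comm (ρ * g) P_S, mul_assoc P_S]
    _ ↔ ρ * g * (1 + ρ * g * P_S) ≤ P_E * d * A := mul_le_mul_iff_right₀ hPS

theorem one_le_linearRegimeEnd_iff (hg : 0 < g) (hd : 0 < d) (hA : 0 < A) (hPS : 0 < P_S) :
    1 ≤ linearRegimeEnd g d A P_S P_E ↔ g / d * (1 + g * P_S) / A ≤ P_E := by
  rw [le_linearRegimeEnd_iff hg hPS zero_le_one, one_mul, div_mul_eq_mul_div, div_div,
    div_le_iff₀ (mul_pos hd hA), mul_assoc P_E]

end LinearRegime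

section Balance

variable {g d P_S : ℝ}

theorem linearDestinationSNR_eq_add_mul (hd : d ≠ 0) (ρ : ℝ) :
    linearDestinationSNR g d P_S ρ = (d + ρ * g) * P_S := by
  rw [linearDestinationSNR]
  field_simp

theorem eq_balancedRatio_div_iff (hg : g ≠ 0) {ρ : ℝ} :
    ρ = balancedRatio (g / d) ↔ d + ρ * g = (1 - ρ) * g := by
  rw [balancedRatio, one_div_div]
  field_simp
  constructor <;> intro h <;> linarith

theorem linearDestinationSNR_eq_eavesdropperSNR_iff (hg : g ≠ 0) (hd : d ≠ 0) (hPS : P_S ≠ 0)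
    {ρ : ℝ} :
    linearDestinationSNR g d P_S ρ = eavesdropperSNR g P_S ρ ↔ ρ = balancedRatio (g / d) := by
  rw [linearDestinationSNR_eq_add_mul hd, eavesdropperSNR, mul_left_inj' hPS,
    eq_balancedRatio_div_iff hg]

theorem eavesdropperSNR_balancedRatio (hg : g ≠ 0) :
    eavesdropperSNR g P_S (balancedRatio (g / d)) = (g + d) * P_S / 2 := by
  rw [eavesdropperSNR, balancedRatio, one_div_div]
  field_simp
  ring

theorem balancedRatio_mem_Ioo {α : ℝ} (hα : 1 < α) : balancedRatio α ∈ Set.Ioo 0 (1 / 2) := by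
  have one_div_α_pos : 0 < 1 / α := one_div_pos.mpr (zero_lt_one.trans hα)
  have one_div_α_lt_one : 1 / α < 1 := (div_lt_one (zero_lt_one.trans hα)).mpr hα
  constructor <;> rw [balancedRatio] <;> linarith

end Balance

/-- Lemma 2: if `α = g/d > 1` and `P_E ≥ α(1 + g P_S)/A`, then `ρ₁ = 1` so the maximum
destination SNR is the linear function `(1 + ρ g/d) P_S d` on `[0,1]`; the ratio
`ρ* = (1 − 1/α)/2 ∈ (0, 1/2)` is the unique solution in `[0,1]` of
`(1 + ρ g/d) P_S d = (1 − ρ) g P_S`, and at `ρ*` both sides equal `(g + d) P_S/2`. -/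
theorem lemma2_closed_form (g d A P_S P_E : ℝ) (hg : 0 < g) (hd : 0 < d) (hA : 0 < A)
    (hPS : 0 < P_S) (hPE : 0 < P_E)
    (hα : 1 < g / d) (hP : P_E ≥ (g / d) * (1 + g * P_S) / A) :
    let ρ₁ : ℝ := min 1 ((-1 + Real.sqrt (1 + 4 * P_S * P_E * d * A)) / (2 * g * P_S))
    let gammaDmax : ℝ → ℝ := fun ρ =>
      if ρ ≤ ρ₁ then (1 + ρ * g / d) * P_S * d
      else (Real.sqrt (1 + ρ * g * P_S) + Real.sqrt (g * A / d) * Real.sqrt (ρ * P_E)) ^ 2 *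
        P_S * d / (1 + ρ * g * P_S + A * P_E)
    let ρstar : ℝ := (1 - 1 / (g / d)) / 2
    ρ₁ = 1 ∧
    (∀ ρ ∈ Set.Icc (0 : ℝ) 1, gammaDmax ρ = (1 + ρ * g / d) * P_S * d) ∧
    0 < ρstar ∧ ρstar < 1 / 2 ∧
    (∀ ρ ∈ Set.Icc (0 : ℝ) 1,
      ((1 + ρ * g / d) * P_S * d = (1 - ρ) * g * P_S ↔ ρ = ρstar)) ∧
    (1 + ρstar * g / d) * P_S * d = (g + d) * P_S / 2 ∧
    (1 - ρstar) * g * P_S = (g + d) * P_S / 2 := by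
  intro ρ₁ gammaDmax ρstar
  have threshold_eq_one : ρ₁ = 1 :=
    min_eq_left ((one_le_linearRegimeEnd_iff hg hd hA hPS).mpr hP)
  have balance_iff (ρ : ℝ) :
      linearDestinationSNR g d P_S ρ = eavesdropperSNR g P_S ρ ↔ ρ = ρstar :=
    linearDestinationSNR_eq_eavesdropperSNR_iff hg.ne' hd.ne' hPS.ne'
  have common_value : eavesdropperSNR g P_S ρstar = (g + d) * P_S / 2 :=
    eavesdropperSNR_balancedRatio hg.ne'
  obtain ⟨ρstar_pos, ρstar_lt_half⟩ : ρstar ∈ Set.Ioo 0 (1 / 2) := balancedRatio_mem_Ioo hα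
  exact ⟨threshold_eq_one, fun ρ hρ ↦ if_pos (hρ.2.trans_eq threshold_eq_one.symm),
    ρstar_pos, ρstar_lt_half, fun ρ _ ↦ balance_iff ρ,
    ((balance_iff ρstar).mpr rfl).trans common_value, common_value⟩
end

section
/- (Case 1: existence and uniqueness of the optimal power-splitting ratio.) Let g, d, A, P_S, P_E > 0 be reals and define ρ₁ = min{1, (−1 + √(1 + 4·P_S·P_E·d·A))/(2·g·P_S)} and the piecewise function γ_D^max(ρ) = (1 + ρ·g/d)·P_S·d for 0 ≤ ρ ≤ ρ₁ and γ_D^max(ρ) = (√(1 + ρ·g·P_S) + √(g·A/d)·√(ρ·P_E))²·P_S·d/(1 + ρ·g·P_S + A·P_E) for ρ₁ < ρ ≤ 1, and the linear function γ_E(ρ) = (1 − ρ)·g·P_S. Then: (i) γ_D^max is continuous and strictly increasing on [0, 1]; (ii) γ_E is strictly decreasing with γ_E(1) = 0 < γ_D^max(1); and (iii) if d < g (i.e. γ_D^max(0) < γ_E(0)), the equation γ_D^max(ρ) = γ_E(ρ) has a unique solution ρ* in (0, 1). -/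
/-!
In the variables `p = P_S d`, `a = A P_E`, `u = ρ g P_S` the two branches of `γ_D^max` are
`p + u` and `(√p √(1 + u) + √a √u)² / (1 + u + a)`. By the Cauchy–Schwarz inequality for `(√p, √u)`
and `(√(1 + u), √a)` the second never exceeds the first, and they agree exactly when
`u (1 + u) = p a`, whose nonnegative root is the untruncated threshold: this is why the branches
join continuously. The second branch increases because `(1 + u) / (1 + u + a)` and
`u / (1 + u + a)` do.
-/

open Set

lemma subsingleton_eq_of_strictMonoOn_antitoneOn {α β : Type*} [LinearOrder α] [Preorder β]
    {f g : α → β} {s : Set α} (hf : StrictMonoOn f s) (hg : AntitoneOn g s) :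
    {x ∈ s | f x = g x}.Subsingleton := by
  rintro x ⟨hx, hfgx⟩ y ⟨hy, hfgy⟩
  by_contra hne
  wlog hxy : x < y generalizing x y
  · exact this hy hfgy hx hfgx (Ne.symm hne) ((not_lt.1 hxy).lt_of_ne' hne)
  exact lt_irrefl (f x) <| calc
    f x < f y := hf hx hy hxy
    _ = g y := hfgy
    _ ≤ g x := hg hx hy hxy.le
    _ = f x := hfgx.symm

lemma existsUnique_mem_Ioo_eq_of_strictMonoOn_antitoneOn {α β : Type*}
    [ConditionallyCompleteLinearOrder α] [DenselyOrdered α] [TopologicalSpace α] [OrderTopology α]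
    [LinearOrder β] [TopologicalSpace β] [OrderClosedTopology β]
    {f g : α → β} {a b : α} (hab : a ≤ b)
    (hfc : ContinuousOn f (Icc a b)) (hgc : ContinuousOn g (Icc a b))
    (hf : StrictMonoOn f (Icc a b)) (hg : AntitoneOn g (Icc a b))
    (ha : f a < g a) (hb : g b < f b) : ∃! x, x ∈ Ioo a b ∧ f x = g x := by
  obtain ⟨x, hx, hfgx⟩ := isPreconnected_Icc.intermediate_value₂
    (left_mem_Icc.2 hab) (right_mem_Icc.2 hab) hfc hgc ha.le hb.le
  have hax : a ≠ x := by rintro rfl; exact ha.ne hfgx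
  have hxb : x ≠ b := by rintro rfl; exact hb.ne' hfgx
  exact ⟨x, ⟨⟨hx.1.lt_of_ne hax, hx.2.lt_of_ne hxb⟩, hfgx⟩, fun y ⟨hy, hfgy⟩ ↦
    subsingleton_eq_of_strictMonoOn_antitoneOn hf hg ⟨Ioo_subset_Icc_self hy, hfgy⟩ ⟨hx, hfgx⟩⟩

section Gluing

variable {α β : Type*} [LinearOrder α] {f g : α → β} {s : Set α} {c : α}

lemma strictMonoOn_ite_le [Preorder β] (hc : c ∈ s) (hf : StrictMonoOn f (s ∩ Iic c))
    (hg : StrictMonoOn g (s ∩ Ici c)) (hfg : f c = g c) :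
    StrictMonoOn (fun x ↦ if x ≤ c then f x else g x) s := by
  have eqOn_left : EqOn f (fun x ↦ if x ≤ c then f x else g x) (s ∩ Iic c) :=
    fun x hx ↦ (if_pos hx.2).symm
  have eqOn_right : EqOn g (fun x ↦ if x ≤ c then f x else g x) (s ∩ Ici c) := by
    rintro x ⟨-, hcx⟩
    obtain rfl | hlt := eq_or_lt_of_le hcx
    · simp [hfg]
    · exact (if_neg hlt.not_ge).symm
  have hs : s ∩ Iic c ∪ s ∩ Ici c = s := by
    rw [← inter_union_distrib_left, Iic_union_Ici, inter_univ]
  rw [← hs]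
  exact (hf.congr eqOn_left).union (hg.congr eqOn_right)
    ⟨⟨hc, le_rfl⟩, fun x hx ↦ hx.2⟩ ⟨⟨hc, le_rfl⟩, fun x hx ↦ hx.2⟩

lemma continuousOn_ite_le [TopologicalSpace α] [OrderClosedTopology α] [TopologicalSpace β]
    (hf : ContinuousOn f (s ∩ Iic c)) (hg : ContinuousOn g (s ∩ Ici c)) (hfg : f c = g c) :
    ContinuousOn (fun x ↦ if x ≤ c then f x else g x) s := by
  refine ContinuousOn.if (fun x hx ↦ ?_) (hf.mono ?_) (hg.mono ?_)
  · rw [frontier_Iic_subset c hx.2, hfg]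
  · exact inter_subset_inter_right s isClosed_Iic.closure_subset
  · exact inter_subset_inter_right s <|
      closure_minimal (fun x hx ↦ (not_le.1 hx).le) isClosed_Ici

end Gluing

lemma strictMonoOn_add_div_add {K : Type*} [Field K] [LinearOrder K] [IsStrictOrderedRing K]
    {b c : K} (hbc : b < c) : StrictMonoOn (fun u ↦ (b + u) / (c + u)) (Ioi (-c)) := by
  intro u hu v hv huv
  have hcu : 0 < c + u := neg_lt_iff_pos_add'.1 hu
  have hcv : 0 < c + v := neg_lt_iff_pos_add'.1 hv
  have hpos : 0 < (c - b) * (v - u) := mul_pos (sub_pos.2 hbc) (sub_pos.2 huv)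
  rw [div_lt_div_iff₀ hcu hcv]
  linear_combination hpos

/-- The larger root of `t (1 + t) = c` when `-1 ≤ 4 c`. For `c = P_S P_E d A` it is `g P_S` times
the threshold `ρ₁` before truncation at `1`. -/
noncomputable def branchPoint (c : ℝ) : ℝ := (-1 + √(1 + 4 * c)) / 2

lemma branchPoint_nonneg {c : ℝ} (hc : 0 ≤ c) : 0 ≤ branchPoint c := by
  have : 1 ≤ √(1 + 4 * c) := Real.one_le_sqrt.2 (by linarith)
  unfold branchPoint
  linarith

lemma branchPoint_mul_one_add {c : ℝ} (hc : 0 ≤ 1 + 4 * c) :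
    branchPoint c * (1 + branchPoint c) = c := by
  unfold branchPoint
  linear_combination Real.sq_sqrt hc / 4

lemma le_threshold_iff_mul_le_branchPoint {g d A P_S P_E ρ : ℝ} (hgP : 0 < g * P_S) :
    ρ ≤ (-1 + √(1 + 4 * P_S * P_E * d * A)) / (2 * g * P_S) ↔
      ρ * g * P_S ≤ branchPoint (P_S * d * (A * P_E)) := by
  have hc : 4 * P_S * P_E * d * A = 4 * (P_S * d * (A * P_E)) := by ring
  rw [branchPoint, hc, mul_assoc 2, ← div_div, le_div_iff₀ hgP, mul_assoc ρ]

/-- The branch of `γ_D^max` above `ρ₁`, with `p = P_S d`, `a = A P_E` and `u = ρ g P_S`; the outer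
factor `P_S d` is absorbed into the square. -/
noncomputable def upperBranch (p a u : ℝ) : ℝ := (√(p * (1 + u)) + √(a * u)) ^ 2 / (1 + u + a)

section Branches

variable {p a u : ℝ}

lemma upperBranch_eq_add (hp : 0 ≤ p) (ha : 0 ≤ a) (hu : 0 ≤ u) (h : u * (1 + u) = p * a) :
    upperBranch p a u = p + u := by
  have cross : √(p * (1 + u)) * √(a * u) = u * (1 + u) := by
    have radicand : p * (1 + u) * (a * u) = (u * (1 + u)) ^ 2 := by
      linear_combination -u * (1 + u) * h
    rw [← Real.sqrt_mul (by positivity), radicand, Real.sqrt_sq (by positivity)]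
  rw [upperBranch, div_eq_iff (by positivity), add_sq, Real.sq_sqrt (by positivity),
    Real.sq_sqrt (by positivity), mul_assoc 2, cross]
  linear_combination h

lemma upperBranch_eq_sq_sqrt_add_sqrt (h : 0 ≤ 1 + u + a) :
    upperBranch p a u =
      (√(p * ((1 + u) / (1 + a + u))) + √(a * (u / (1 + a + u)))) ^ 2 := by
  have hT : 0 ≤ 1 + a + u := by linarith
  rw [upperBranch, ← mul_div_assoc, ← mul_div_assoc, Real.sqrt_div' _ hT,
    Real.sqrt_div' _ hT, ← add_div, div_pow, Real.sq_sqrt hT, add_right_comm]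

lemma strictMonoOn_upperBranch (hp : 0 ≤ p) (ha : 0 < a) :
    StrictMonoOn (upperBranch p a) (Ici 0) := by
  intro u (hu : 0 ≤ u) v (hv : 0 ≤ v) huv
  have hu' : u ∈ Ioi (-(1 + a)) := by simp only [mem_Ioi]; linarith
  have hv' : v ∈ Ioi (-(1 + a)) := by simp only [mem_Ioi]; linarith
  have signal_lt : (1 + u) / (1 + a + u) < (1 + v) / (1 + a + v) :=
    strictMonoOn_add_div_add (by linarith) hu' hv' huv
  have relay_lt : u / (1 + a + u) < v / (1 + a + v) := by
    simpa using strictMonoOn_add_div_add (b := 0) (by linarith) hu' hv' huv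
  rw [upperBranch_eq_sq_sqrt_add_sqrt (by positivity),
    upperBranch_eq_sq_sqrt_add_sqrt (by positivity)]
  gcongr ?_ ^ 2
  exact add_lt_add_of_le_of_lt (Real.sqrt_le_sqrt (by gcongr))
    (Real.sqrt_lt_sqrt (by positivity) (by gcongr))

lemma continuousOn_upperBranch (ha : 0 ≤ a) : ContinuousOn (upperBranch p a) (Ici 0) :=
  ContinuousOn.div (by fun_prop) (by fun_prop) fun u (hu : 0 ≤ u) ↦ by positivity

lemma upperBranch_eq_power_formula {g d A P_S P_E ρ : ℝ} (hd : 0 < d) (hP : 0 ≤ P_S)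
    (hgA : 0 ≤ g * A) :
    upperBranch (P_S * d) (A * P_E) (ρ * g * P_S) =
      (√(1 + ρ * g * P_S) + √(g * A / d) * √(ρ * P_E)) ^ 2 * P_S * d /
        (1 + ρ * g * P_S + A * P_E) := by
  have hPd : 0 ≤ P_S * d := by positivity
  have relay : A * P_E * (ρ * g * P_S) = P_S * d * (g * A / d * (ρ * P_E)) := by field_simp
  rw [upperBranch, relay, Real.sqrt_mul hPd, Real.sqrt_mul hPd,
    Real.sqrt_mul (show 0 ≤ g * A / d by positivity), ← mul_add, mul_pow, Real.sq_sqrt hPd]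
  ring

end Branches

/-- The maximal destination SNR `γ_D^max` as a function of `u = ρ g P_S`, with `p = P_S d` and
`a = A P_E`. The truncation of `ρ₁` at `1` is dropped, as it has no effect for `ρ ≤ 1`. -/
noncomputable def destSNR (p a u : ℝ) : ℝ :=
  if u ≤ branchPoint (p * a) then p + u else upperBranch p a u

section DestSNR

variable {p a : ℝ}

lemma destSNR_zero (hpa : 0 ≤ p * a) : destSNR p a 0 = p := by
  rw [destSNR, if_pos (branchPoint_nonneg hpa), add_zero]

lemma add_branchPoint_eq_upperBranch (hp : 0 ≤ p) (ha : 0 ≤ a) :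
    p + branchPoint (p * a) = upperBranch p a (branchPoint (p * a)) :=
  (upperBranch_eq_add hp ha (branchPoint_nonneg (by positivity))
    (branchPoint_mul_one_add (by positivity))).symm

lemma strictMonoOn_destSNR (hp : 0 ≤ p) (ha : 0 < a) : StrictMonoOn (destSNR p a) (Ici 0) :=
  strictMonoOn_ite_le (branchPoint_nonneg (by positivity))
    ((strictMono_id.const_add p).strictMonoOn _)
    ((strictMonoOn_upperBranch hp ha).mono inter_subset_left)
    (add_branchPoint_eq_upperBranch hp ha.le)

lemma continuousOn_destSNR (hp : 0 ≤ p) (ha : 0 ≤ a) : ContinuousOn (destSNR p a) (Ici 0) :=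
  continuousOn_ite_le (by fun_prop) ((continuousOn_upperBranch ha).mono inter_subset_left)
    (add_branchPoint_eq_upperBranch hp ha)

lemma ite_eq_destSNR {g d A P_S P_E ρ : ℝ} (hg : 0 < g) (hd : 0 < d) (hA : 0 ≤ A)
    (hP : 0 < P_S) (hρ : ρ ≤ 1) :
    (if ρ ≤ min 1 ((-1 + √(1 + 4 * P_S * P_E * d * A)) / (2 * g * P_S)) then
        (1 + ρ * g / d) * P_S * d
      else (√(1 + ρ * g * P_S) + √(g * A / d) * √(ρ * P_E)) ^ 2 * P_S * d /
        (1 + ρ * g * P_S + A * P_E)) =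
      destSNR (P_S * d) (A * P_E) (ρ * g * P_S) := by
  have lowerBranch : (1 + ρ * g / d) * P_S * d = P_S * d + ρ * g * P_S := by field_simp
  simp only [destSNR, le_min_iff, hρ, true_and,
    le_threshold_iff_mul_le_branchPoint (mul_pos hg hP),
    upperBranch_eq_power_formula hd hP.le (mul_nonneg hg.le hA), lowerBranch]

end DestSNR

/-- Case 1 (existence and uniqueness of the optimal power-splitting ratio): the piecewise
function `γ_D^max` is continuous and strictly increasing on `[0,1]`, the linear function
`γ_E(ρ) = (1 − ρ) g P_S` is strictly decreasing with `γ_E(1) = 0 < γ_D^max(1)`, and if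
`d < g` then the equation `γ_D^max(ρ) = γ_E(ρ)` has a unique solution in `(0,1)`. -/
theorem case1_unique_intersection (g d A P_S P_E : ℝ) (hg : 0 < g) (hd : 0 < d)
    (hA : 0 < A) (hPS : 0 < P_S) (hPE : 0 < P_E) :
    let ρ₁ : ℝ := min 1 ((-1 + Real.sqrt (1 + 4 * P_S * P_E * d * A)) / (2 * g * P_S))
    let gammaDmax : ℝ → ℝ := fun ρ =>
      if ρ ≤ ρ₁ then (1 + ρ * g / d) * P_S * d
      else (Real.sqrt (1 + ρ * g * P_S) + Real.sqrt (g * A / d) * Real.sqrt (ρ * P_E)) ^ 2 *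
        P_S * d / (1 + ρ * g * P_S + A * P_E)
    let gammaE : ℝ → ℝ := fun ρ => (1 - ρ) * g * P_S
    ContinuousOn gammaDmax (Set.Icc 0 1) ∧
    StrictMonoOn gammaDmax (Set.Icc 0 1) ∧
    StrictAnti gammaE ∧
    gammaE 1 = 0 ∧ 0 < gammaDmax 1 ∧
    (d < g → ∃! ρ : ℝ, ρ ∈ Set.Ioo (0 : ℝ) 1 ∧ gammaDmax ρ = gammaE ρ) := by
  intro ρ₁ D E
  have hD : EqOn D (fun ρ ↦ destSNR (P_S * d) (A * P_E) (ρ * g * P_S)) (Icc 0 1) :=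
    fun ρ hρ ↦ ite_eq_destSNR hg hd hA.le hPS hρ.2
  have mapsTo : MapsTo (fun ρ ↦ ρ * g * P_S) (Icc 0 1) (Ici 0) := fun ρ hρ ↦
    mul_nonneg (mul_nonneg hρ.1 hg.le) hPS.le
  have hDcont : ContinuousOn D (Icc 0 1) :=
    ((continuousOn_destSNR (by positivity) (by positivity)).comp (by fun_prop) mapsTo).congr hD
  have hDmono : StrictMonoOn D (Icc 0 1) :=
    ((strictMonoOn_destSNR (by positivity) (by positivity)).comp
      (fun _ _ _ _ h ↦ by gcongr) mapsTo).congr hD.symm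
  have hEanti : StrictAnti E := fun _ _ h ↦ by simp only [E]; gcongr
  have hD0 : D 0 = P_S * d := by
    have hPA : 0 ≤ P_S * d * (A * P_E) := by positivity
    simpa [destSNR_zero hPA] using hD (left_mem_Icc.2 zero_le_one)
  have hE1 : E 1 = 0 := by simp [E]
  have hD1 : 0 < D 1 := (hD0 ▸ mul_pos hPS hd).trans
    (hDmono (left_mem_Icc.2 zero_le_one) (right_mem_Icc.2 zero_le_one) zero_lt_one)
  refine ⟨hDcont, hDmono, hEanti, hE1, hD1, fun hdg ↦ ?_⟩
  have h0 : D 0 < E 0 := by rw [hD0, mul_comm]; simpa [E] using mul_lt_mul_of_pos_right hdg hPS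
  exact existsUnique_mem_Ioo_eq_of_strictMonoOn_antitoneOn zero_le_one hDcont (by fun_prop)
    hDmono (hEanti.antitone.antitoneOn _) h0 (hE1.trans_lt hD1)
end
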